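/- arXiv:cs/0312045 — 6 statements merged into one kernel-verified Lean document; each statement's English description precedes it below -/
import Mathlib

section
/- For any weight constraint of the form L ≤ S and any consistent sets Z and Z' of literals, Z' ⊨ [L ≤ S]^Z if and only if Z' ⊨ (L ≤ S)^Z. -/
open Classical

/-- A literal: a propositional atom `a` or its classical negation `¬ a`. -/
inductive Lit (α : Type) where
  | pos : α → Lit α
  | neg : α → Lit α

/-- The atom of a literal. -/
def Lit.atom {α : Type} : Lit α → α
  | .pos a => a
  | .neg a => a

/-- Mapping literals along a map of atoms. -/
def Lit.map {α β : Type} (f : α → β) : Lit α → Lit β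
  | .pos a => .pos (f a)
  | .neg a => .neg (f a)

/-- A set of literals is consistent if it contains no pair `a`, `¬ a`. -/
def LitConsistent {α : Type} (Z : Set (Lit α)) : Prop :=
  ∀ a : α, ¬(Lit.pos a ∈ Z ∧ Lit.neg a ∈ Z)

/-- Formulas (nested expressions): elementary formulas are literals, `⊥` and `⊤`;
formulas are built from them using negation as failure `naf`, conjunction `conj`
and disjunction `disj`. -/
inductive Formula (α : Type) where
  | lit : Lit α → Formula α
  | fbot : Formula α
  | ftop : Formula α
  | naf : Formula α → Formula α
  | conj : Formula α → Formula α → Formula α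
  | disj : Formula α → Formula α → Formula α

/-- Satisfaction of a formula by a set of literals. -/
def Formula.sat {α : Type} (Z : Set (Lit α)) : Formula α → Prop
  | .lit l => l ∈ Z
  | .fbot => False
  | .ftop => True
  | .naf F => ¬ F.sat Z
  | .conj F G => F.sat Z ∧ G.sat Z
  | .disj F G => F.sat Z ∨ G.sat Z

/-- A rule with nested expressions: `head ← body`. -/
structure NRule (α : Type) where
  head : Formula α
  body : Formula α

/-- `Z` satisfies a program (a set of rules). -/
def progSat {α : Type} (Z : Set (Lit α)) (P : Set (NRule α)) : Prop :=
  ∀ r ∈ P, r.body.sat Z → r.head.sat Z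

/-- The reduct `F^Z` of a formula relative to a set of literals `Z`. -/
noncomputable def Formula.reduct {α : Type} (Z : Set (Lit α)) : Formula α → Formula α
  | .lit l => .lit l
  | .fbot => .fbot
  | .ftop => .ftop
  | .naf F => if F.sat Z then .fbot else .ftop
  | .conj F G => .conj (F.reduct Z) (G.reduct Z)
  | .disj F G => .disj (F.reduct Z) (G.reduct Z)

/-- The reduct `Π^Z` of a program. -/
noncomputable def progReduct {α : Type} (Z : Set (Lit α)) (P : Set (NRule α)) : Set (NRule α) :=
  (fun r : NRule α => NRule.mk (r.head.reduct Z) (r.body.reduct Z)) '' P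

/-- `Z` is minimal (under inclusion) among the consistent sets of literals satisfying `P`. -/
def MinimalSat {α : Type} (Z : Set (Lit α)) (P : Set (NRule α)) : Prop :=
  LitConsistent Z ∧ progSat Z P ∧
    ∀ Z' : Set (Lit α), LitConsistent Z' → progSat Z' P → Z' ⊆ Z → Z' = Z

/-- `Z` is an answer set for a program `P` with nested expressions:
`Z` is minimal among the consistent sets satisfying the reduct `P^Z`. -/
def AnswerSet {α : Type} (Z : Set (Lit α)) (P : Set (NRule α)) : Prop :=
  MinimalSat Z (progReduct Z P)

/-- Strong equivalence of programs with nested expressions. -/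
def StrongEq {α : Type} (P₁ P₂ : Set (NRule α)) : Prop :=
  ∀ P : Set (NRule α), ∀ Z : Set (Lit α), AnswerSet Z (P₁ ∪ P) ↔ AnswerSet Z (P₂ ∪ P)

/-- Multiple conjunction (the empty conjunction is `⊤`). -/
def bigConj {α : Type} : List (Formula α) → Formula α
  | [] => .ftop
  | F :: Fs => .conj F (bigConj Fs)

/-- Multiple disjunction (the empty disjunction is `⊥`). -/
def bigDisj {α : Type} : List (Formula α) → Formula α
  | [] => .fbot
  | F :: Fs => .disj F (bigDisj Fs)

/-- `⟨F₁,…,F_n⟩:X`: the disjunction over `I ∈ X` of the conjunctions of the `Fᵢ`, `i ∈ I`. -/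
noncomputable def angled {α : Type} {n : ℕ} (F : Fin n → Formula α) (X : Finset (Finset (Fin n))) :
    Formula α :=
  bigDisj (X.toList.map fun I => bigConj (I.toList.map F))
/-- A rule element: a literal (positive rule element) or a literal
prefixed with negation as failure (negative rule element). -/
inductive RElem (α : Type) where
  | pos : Lit α → RElem α
  | neg : Lit α → RElem α

/-- Satisfaction of a rule element by a set of literals. -/
def RElem.sat {α : Type} (Z : Set (Lit α)) : RElem α → Prop
  | .pos l => l ∈ Z
  | .neg l => l ∉ Z

/-- Whether a rule element is negative. -/
def RElem.isNegB {α : Type} : RElem α → Bool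
  | .pos _ => false
  | .neg _ => true

/-- The sum of the weights of the entries of `S` that are satisfied by `Z`. -/
noncomputable def weightSum {α : Type} (Z : Set (Lit α)) (S : List (RElem α × ℝ)) : ℝ :=
  (S.map fun p => if p.1.sat Z then p.2 else 0).sum

/-- A weight constraint `L ≤ {c₁=w₁,…,c_m=w_m} ≤ U` with nonnegative weights;
`L` and `U` may be `−∞`/`+∞`. -/
structure WConstraint (α : Type) where
  L : EReal
  S : List (RElem α × ℝ)
  U : EReal
  nonneg : ∀ p ∈ S, (0 : ℝ) ≤ p.2

/-- `Z` satisfies the weight constraint `L ≤ S ≤ U`. -/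
def WConstraint.sat {α : Type} (Z : Set (Lit α)) (C : WConstraint α) : Prop :=
  C.L ≤ (weightSum Z C.S : EReal) ∧ (weightSum Z C.S : EReal) ≤ C.U

/-- A rule with weight constraints, `C₀ ← C₁,…,C_n`. -/
structure WRule (α : Type) where
  head : WConstraint α
  body : List (WConstraint α)

/-- `Z` satisfies a program with weight constraints. -/
def wProgSat {α : Type} (Z : Set (Lit α)) (Ω : Set (WRule α)) : Prop :=
  ∀ R ∈ Ω, (∀ C ∈ R.body, C.sat Z) → R.head.sat Z

/-- A weight constraint of the form `L ≤ S` (no upper bound), with nonnegative weights. -/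
structure LConstraint (α : Type) where
  L : EReal
  S : List (RElem α × ℝ)
  nonneg : ∀ p ∈ S, (0 : ℝ) ≤ p.2

/-- Satisfaction of a lower-bound constraint (by an arbitrary set of literals). -/
def LConstraint.sat {α : Type} (Z : Set (Lit α)) (C : LConstraint α) : Prop :=
  C.L ≤ (weightSum Z C.S : EReal)

/-- A Horn rule: a literal as head, lower-bound constraints as body. -/
structure HornRule (α : Type) where
  head : Lit α
  body : List (LConstraint α)

/-- Satisfaction of a set of Horn rules by an arbitrary set of literals. -/
def hornSat {α : Type} (Z : Set (Lit α)) (P : Set (HornRule α)) : Prop :=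
  ∀ r ∈ P, (∀ C ∈ r.body, C.sat Z) → r.head ∈ Z

/-- The deductive closure of a set of Horn rules: its unique minimal satisfying
set of literals (the intersection of all satisfying sets). -/
def cl {α : Type} (P : Set (HornRule α)) : Set (Lit α) :=
  ⋂₀ {Z : Set (Lit α) | hornSat Z P}

/-- The sum of the weights of the negative entries of `S` satisfied by `Z`. -/
noncomputable def negSatWeight {α : Type} (Z : Set (Lit α)) (S : List (RElem α × ℝ)) : ℝ :=
  (S.map fun p => if p.1.isNegB = true ∧ p.1.sat Z then p.2 else 0).sum

/-- The reduct `(L ≤ S)^Z` of a lower-bound constraint: drop the negative entries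
of `S` and decrease `L` by the total weight of the negative entries satisfied by `Z`. -/
noncomputable def LConstraint.reduct {α : Type} (Z : Set (Lit α)) (C : LConstraint α) :
    LConstraint α :=
  ⟨C.L - ((negSatWeight Z C.S : ℝ) : EReal),
   C.S.filter (fun p => !p.1.isNegB),
   fun p hp => C.nonneg p (List.mem_of_mem_filter hp)⟩

/-- The lower-bound part `L ≤ S` of a weight constraint `L ≤ S ≤ U`. -/
def WConstraint.lower {α : Type} (C : WConstraint α) : LConstraint α :=
  ⟨C.L, C.S, C.nonneg⟩

/-- The positive rule elements (as literals) occurring in `S`. -/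
def posElems {α : Type} (S : List (RElem α × ℝ)) : Set (Lit α) :=
  {l : Lit α | ∃ w : ℝ, (RElem.pos l, w) ∈ S}

/-- The reduct `Ω^Z` of a program with weight constraints: for each rule
`L₀≤S₀≤U₀ ← C₁,…,C_n` whose upper bounds are all satisfied by `Z`, the Horn rules
`l ← C₁^Z,…,C_n^Z` for all positive rule elements `l` of `S₀` with `l ∈ Z`. -/
noncomputable def wProgReduct {α : Type} (Z : Set (Lit α)) (Ω : Set (WRule α)) :
    Set (HornRule α) :=
  { r : HornRule α | ∃ R ∈ Ω,
      (∀ C ∈ R.body, (weightSum Z C.S : EReal) ≤ C.U) ∧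
      r.head ∈ posElems R.head.S ∧ r.head ∈ Z ∧
      r.body = R.body.map (fun C => C.lower.reduct Z) }

/-- `Z` is an answer set for the program `Ω` with weight constraints. -/
def WAnswerSet {α : Type} (Z : Set (Lit α)) (Ω : Set (WRule α)) : Prop :=
  LitConsistent Z ∧ wProgSat Z Ω ∧ cl (wProgReduct Z Ω) = Z

/-- Strong equivalence of programs with weight constraints. -/
def WStrongEq {α : Type} (Ω₁ Ω₂ : Set (WRule α)) : Prop :=
  ∀ Ω : Set (WRule α), ∀ Z : Set (Lit α), WAnswerSet Z (Ω₁ ∪ Ω) ↔ WAnswerSet Z (Ω₂ ∪ Ω)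

/-- A rule element as a formula: `l` becomes the literal `l`, `not l` becomes `naf l`. -/
def RElem.toFormula {α : Type} : RElem α → Formula α
  | .pos l => .lit l
  | .neg l => .naf (.lit l)

/-- The translation `[L ≤ S]`: the formula `⟨c₁,…,c_m⟩:{I : L ≤ Σ_{i∈I} wᵢ}`. -/
noncomputable def trLower {α : Type} (L : EReal) (S : List (RElem α × ℝ)) : Formula α :=
  angled (fun i : Fin S.length => (S.get i).1.toFormula)
    (Finset.univ.filter fun I : Finset (Fin S.length) =>
      L ≤ ((∑ i ∈ I, (S.get i).2 : ℝ) : EReal))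

/-- The translation `[S ≤ U]`: the formula `not ⟨c₁,…,c_m⟩:{I : U < Σ_{i∈I} wᵢ}`. -/
noncomputable def trUpper {α : Type} (S : List (RElem α × ℝ)) (U : EReal) : Formula α :=
  .naf (angled (fun i : Fin S.length => (S.get i).1.toFormula)
    (Finset.univ.filter fun I : Finset (Fin S.length) =>
      U < ((∑ i ∈ I, (S.get i).2 : ℝ) : EReal)))

/-- The translation `[L ≤ S ≤ U] = [L ≤ S],[S ≤ U]`. -/
noncomputable def trWC {α : Type} (C : WConstraint α) : Formula α :=
  .conj (trLower C.L C.S) (trUpper C.S C.U)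

/-- The formulas `l ; not l` for the positive rule elements `l` of `S`, in order. -/
def choiceFmls {α : Type} (S : List (RElem α × ℝ)) : List (Formula α) :=
  S.filterMap fun p =>
    match p.1 with
    | RElem.pos l => some (Formula.disj (.lit l) (.naf (.lit l)))
    | RElem.neg _ => none

/-- The translation of a rule with weight constraints `C₀ ← C₁,…,C_n`:
`(l₁; not l₁),…,(l_p; not l_p),[C₀] ← [C₁],…,[C_n]`. -/
noncomputable def trRule {α : Type} (R : WRule α) : NRule α :=
  ⟨bigConj (choiceFmls R.head.S ++ [trWC R.head]), bigConj (R.body.map trWC)⟩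

/-- The translation `[Ω]` of a program with weight constraints. -/
noncomputable def trProg {α : Type} (Ω : Set (WRule α)) : Set (NRule α) :=
  trRule '' Ω

/-- The nondisjunctive translation `[Ω]^{nd}`: each rule `C₀ ← C₁,…,C_n` is replaced
by the rules `l ← not not l, [C₁],…,[C_n]` for all positive rule elements `l` of `C₀`
together with `⊥ ← not [C₀], [C₁],…,[C_n]`. -/
noncomputable def ndTrans {α : Type} (Ω : Set (WRule α)) : Set (NRule α) :=
  { r : NRule α | ∃ R ∈ Ω,
      (∃ l ∈ posElems R.head.S,
        r = ⟨.lit l, bigConj (.naf (.naf (.lit l)) :: R.body.map trWC)⟩) ∨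
      r = ⟨.fbot, bigConj (.naf (trWC R.head) :: R.body.map trWC)⟩ }

theorem sat_reduct_bigConj {α : Type} (Z Z' : Set (Lit α)) (l : List (Formula α)) :
    ((bigConj l).reduct Z).sat Z' ↔ ∀ F ∈ l, (F.reduct Z).sat Z' := by
  induction l with
  | nil => simp [bigConj, Formula.reduct, Formula.sat]
  | cons F l ih => simp [bigConj, Formula.reduct, Formula.sat, ih]

theorem sat_reduct_bigDisj {α : Type} (Z Z' : Set (Lit α)) (l : List (Formula α)) :
    ((bigDisj l).reduct Z).sat Z' ↔ ∃ F ∈ l, (F.reduct Z).sat Z' := by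
  induction l with
  | nil => simp [bigDisj, Formula.reduct, Formula.sat]
  | cons F l ih => simp [bigDisj, Formula.reduct, Formula.sat, ih]

theorem sum_sat_reduct {α : Type} (Z Z' : Set (Lit α)) (S : List (RElem α × ℝ)) :
    (S.map fun p => if (p.1.toFormula.reduct Z).sat Z' then p.2 else 0).sum
      = weightSum Z' (S.filter (fun p => !p.1.isNegB)) + negSatWeight Z S := by
  induction S with
  | nil => simp [weightSum, negSatWeight]
  | cons p S ih =>
    obtain ⟨c, w⟩ := p
    simp only [weightSum, negSatWeight] at ih ⊢
    rw [List.map_cons, List.sum_cons, ih]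
    cases c with
    | pos l =>
      by_cases h : l ∈ Z' <;>
        simp [RElem.isNegB, RElem.toFormula, RElem.sat, Formula.reduct, Formula.sat, h, add_assoc]
    | neg l =>
      by_cases h : l ∈ Z
      · simp [RElem.isNegB, RElem.toFormula, RElem.sat, Formula.reduct, Formula.sat, h]
      · simp [RElem.isNegB, RElem.toFormula, RElem.sat, Formula.reduct, Formula.sat, h]
        ring

theorem sum_filter_get {β : Type} (S : List (β × ℝ)) (P : β → Prop) :
    ∑ i ∈ Finset.univ.filter (fun i : Fin S.length => P (S.get i).1), (S.get i).2
      = (S.map fun p => if P p.1 then p.2 else 0).sum := by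
  rw [Finset.sum_filter, ← List.sum_ofFn]
  congr 1
  conv_rhs => rw [← List.ofFn_get S, List.map_ofFn]
  simp [Function.comp_def]

/-- For any constraint `L ≤ S` and consistent sets `Z`, `Z'` of literals,
`Z' ⊨ [L ≤ S]^Z` iff `Z' ⊨ (L ≤ S)^Z`. -/
theorem sat_reduct_trLower_iff (C : LConstraint ℕ) (Z Z' : Set (Lit ℕ))
    (hZ : LitConsistent Z) (hZ' : LitConsistent Z') :
    ((trLower C.L C.S).reduct Z).sat Z' ↔ (C.reduct Z).sat Z' := by
  have key : ((trLower C.L C.S).reduct Z).sat Z' ↔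
      C.L ≤ (((C.S.map fun p => if (p.1.toFormula.reduct Z).sat Z' then p.2 else 0).sum : ℝ)
        : EReal) := by
    rw [← sum_filter_get C.S (fun c => (c.toFormula.reduct Z).sat Z')]
    simp only [trLower, angled, sat_reduct_bigDisj, List.mem_map, Finset.mem_toList,
      Finset.mem_filter, Finset.mem_univ, true_and, exists_exists_and_eq_and,
      sat_reduct_bigConj, forall_exists_index, and_imp, forall_apply_eq_imp_iff₂]
    constructor
    · rintro ⟨I, hI, h⟩
      refine hI.trans (EReal.coe_le_coe_iff.2 ?_)
      refine Finset.sum_le_sum_of_subset_of_nonneg ?_ ?_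
      · intro i hi
        exact Finset.mem_filter.2 ⟨Finset.mem_univ _, h i hi⟩
      · intro i _ _
        exact C.nonneg _ (List.get_mem _ _)
    · intro h
      exact ⟨_, h, fun i hi => (Finset.mem_filter.1 hi).2⟩
  rw [key, sum_sat_reduct, LConstraint.sat, LConstraint.reduct, EReal.coe_add,
    EReal.sub_le_iff_le_add (by simp) (by simp)]
end

section
/- For any weight constraint of the form S ≤ U and any consistent set Z of literals, the reduct [S ≤ U]^Z equals the formula ⊤ if Z ⊨ S ≤ U, and equals the formula ⊥ otherwise. -/
open Classical

/-- A weight constraint of the form `S ≤ U`, with nonnegative weights. -/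
structure UConstraint (α : Type) where
  S : List (RElem α × ℝ)
  U : EReal
  nonneg : ∀ p ∈ S, (0 : ℝ) ≤ p.2

/-- `Z` satisfies `S ≤ U`. -/
def UConstraint.sat {α : Type} (Z : Set (Lit α)) (C : UConstraint α) : Prop :=
  (weightSum Z C.S : EReal) ≤ C.U

theorem bigConj_sat {α : Type} (Z : Set (Lit α)) (l : List (Formula α)) :
    (bigConj l).sat Z ↔ ∀ F ∈ l, F.sat Z := by
  induction l with
  | nil => simp [bigConj, Formula.sat]
  | cons a l ih => simp [bigConj, Formula.sat, ih]

theorem bigDisj_sat {α : Type} (Z : Set (Lit α)) (l : List (Formula α)) :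
    (bigDisj l).sat Z ↔ ∃ F ∈ l, F.sat Z := by
  induction l with
  | nil => simp [bigDisj, Formula.sat]
  | cons a l ih => simp [bigDisj, Formula.sat, ih]

theorem angled_sat {α : Type} {n : ℕ} (Z : Set (Lit α)) (F : Fin n → Formula α)
    (X : Finset (Finset (Fin n))) :
    (angled F X).sat Z ↔ ∃ I ∈ X, ∀ i ∈ I, (F i).sat Z := by
  simp [angled, bigDisj_sat, bigConj_sat]

theorem toFormula_sat {α : Type} (Z : Set (Lit α)) (c : RElem α) :
    c.toFormula.sat Z ↔ c.sat Z := by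
  cases c <;> simp [RElem.toFormula, RElem.sat, Formula.sat]

theorem weightSum_eq {α : Type} (Z : Set (Lit α)) (S : List (RElem α × ℝ)) :
    weightSum Z S = ∑ i : Fin S.length, if (S.get i).1.sat Z then (S.get i).2 else 0 := by
  unfold weightSum
  rw [← Fin.sum_univ_fun_getElem]
  rfl

/-- For any constraint `S ≤ U` and any consistent set `Z` of literals, the reduct
`[S ≤ U]^Z` equals `⊤` if `Z ⊨ S ≤ U`, and `⊥` otherwise. -/
theorem reduct_trUpper_eq (C : UConstraint ℕ) (Z : Set (Lit ℕ)) (hZ : LitConsistent Z) :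
    (trUpper C.S C.U).reduct Z = if C.sat Z then Formula.ftop else Formula.fbot := by
  have key : (angled (fun i : Fin C.S.length => (C.S.get i).1.toFormula)
      (Finset.univ.filter fun I : Finset (Fin C.S.length) =>
        C.U < ((∑ i ∈ I, (C.S.get i).2 : ℝ) : EReal))).sat Z ↔ ¬ C.sat Z := by
    rw [angled_sat]
    simp only [toFormula_sat, Finset.mem_filter, Finset.mem_univ, true_and, UConstraint.sat,
      not_le, weightSum_eq]
    constructor
    · rintro ⟨I, hU, hI⟩
      refine hU.trans_le (EReal.coe_le_coe_iff.2 ?_)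
      rw [← Finset.sum_filter]
      refine Finset.sum_le_sum_of_subset_of_nonneg ?_ ?_
      · intro i hi
        simpa using hI i hi
      · intro i _ _
        exact C.nonneg _ (List.get_mem _ _)
    · intro h
      refine ⟨Finset.univ.filter fun i => (C.S.get i).1.sat Z, ?_, ?_⟩
      · rwa [Finset.sum_filter]
      · intro i hi
        simpa using hi
  unfold trUpper
  simp only [Formula.reduct]
  by_cases h : C.sat Z
  · rw [if_neg (fun h' => key.1 h' h), if_pos h]
  · rw [if_pos (key.2 h), if_neg h]
end

section
/- Let Π₁ and Π₂ be programs with nested expressions such that the head of every rule in Π₂ is ⊥. A consistent set Z of literals is an answer set for Π₁ ∪ Π₂ if and only if Z is an answer set for Π₁ and Z ⊨ Π₂. -/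
open Classical

theorem Formula.sat_reduct_self {α : Type} (Z : Set (Lit α)) (F : Formula α) :
    (F.reduct Z).sat Z ↔ F.sat Z := by
  induction F with
  | lit l => rfl
  | fbot => rfl
  | ftop => rfl
  | naf F ih =>
    by_cases hF : F.sat Z <;> simp [Formula.reduct, Formula.sat, hF]
  | conj F G ihF ihG => simp [Formula.reduct, Formula.sat, ihF, ihG]
  | disj F G ihF ihG => simp [Formula.reduct, Formula.sat, ihF, ihG]

theorem Formula.sat_reduct_mono {α : Type} (Z : Set (Lit α)) {Y X : Set (Lit α)} (hYX : Y ⊆ X)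
    (F : Formula α) : (F.reduct Z).sat Y → (F.reduct Z).sat X := by
  induction F with
  | lit l => exact fun hl => hYX hl
  | fbot => exact id
  | ftop => exact id
  | naf F ih =>
    by_cases hF : F.sat Z <;> simp [Formula.reduct, Formula.sat, hF]
  | conj F G ihF ihG => exact fun hh => ⟨ihF hh.1, ihG hh.2⟩
  | disj F G ihF ihG => exact fun hh => hh.imp ihF ihG

theorem progSat_reduct_iff {α : Type} (Z Y : Set (Lit α)) (P : Set (NRule α)) :
    progSat Y (progReduct Z P) ↔
      ∀ r ∈ P, (r.body.reduct Z).sat Y → (r.head.reduct Z).sat Y := by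
  simp [progSat, progReduct]

theorem progSat_reduct_union {α : Type} (Z Y : Set (Lit α)) (P Q : Set (NRule α)) :
    progSat Y (progReduct Z (P ∪ Q)) ↔
      progSat Y (progReduct Z P) ∧ progSat Y (progReduct Z Q) := by
  simp only [progSat_reduct_iff, Set.mem_union]
  exact ⟨fun hh => ⟨fun r hr => hh r (Or.inl hr), fun r hr => hh r (Or.inr hr)⟩,
    fun hh r hr => hr.elim (hh.1 r) (hh.2 r)⟩

theorem progSat_reduct_self {α : Type} (Z : Set (Lit α)) (P : Set (NRule α)) :
    progSat Z (progReduct Z P) ↔ progSat Z P := by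
  rw [progSat_reduct_iff]
  simp only [Formula.sat_reduct_self, progSat]

/-- If the head of every rule in `P₂` is `⊥`, then a consistent set `Z` of literals is
an answer set for `P₁ ∪ P₂` iff `Z` is an answer set for `P₁` and `Z ⊨ P₂`. -/
theorem answer_set_union_constraints (P₁ P₂ : Set (NRule ℕ))
    (h : ∀ r ∈ P₂, r.head = Formula.fbot)
    (Z : Set (Lit ℕ)) (hZ : LitConsistent Z) :
    AnswerSet Z (P₁ ∪ P₂) ↔ AnswerSet Z P₁ ∧ progSat Z P₂ := by
  have key : ∀ Y : Set (Lit ℕ), Y ⊆ Z → progSat Z P₂ → progSat Y (progReduct Z P₂) := by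
    intro Y hY hP
    rw [progSat_reduct_iff]
    intro r hr hb
    have hb' := Formula.sat_reduct_mono Z hY r.body hb
    rw [Formula.sat_reduct_self] at hb'
    have hh := hP r hr hb'
    rw [h r hr] at hh
    exact hh.elim
  constructor
  · rintro ⟨_, hs, hm⟩
    rw [progSat_reduct_union] at hs
    have h2 := (progSat_reduct_self Z P₂).1 hs.2
    exact ⟨⟨hZ, hs.1, fun Y hc hY hs' =>
      hm Y hc ((progSat_reduct_union Z Y P₁ P₂).2 ⟨hY, key Y hs' h2⟩) hs'⟩, h2⟩
  · rintro ⟨⟨_, hs, hm⟩, h2⟩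
    exact ⟨hZ, (progSat_reduct_union Z Z P₁ P₂).2 ⟨hs, (progSat_reduct_self Z P₂).2 h2⟩,
      fun Y hc hY hs' => hm Y hc ((progSat_reduct_union Z Y P₁ P₂).1 hY).1 hs'⟩
end

section
/- (Lemma on Explicit Definitions) Let Π be a program with nested expressions, let Q be a set of atoms that do not occur in Π, and for every q ∈ Q let Def(q) be a formula that contains no atoms from Q. Then the map Z ↦ Z ∖ Q (removing from Z the atoms belonging to Q) is a bijection from the set of answer sets of Π ∪ {q ← Def(q) : q ∈ Q} onto the set of answer sets of Π. -/
open Classical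

/-- The atoms occurring in a formula. -/
def Formula.atoms {α : Type} : Formula α → Set α
  | .lit l => {l.atom}
  | .fbot => ∅
  | .ftop => ∅
  | .naf F => F.atoms
  | .conj F G => F.atoms ∪ G.atoms
  | .disj F G => F.atoms ∪ G.atoms

/-- Literals of `Z` whose atoms are outside `Q`. -/
def restr (Q : Set ℕ) (Z : Set (Lit ℕ)) : Set (Lit ℕ) := {l ∈ Z | l.atom ∉ Q}

/-- Extension of the restriction of `Y` by the defined atoms (relative to the reduct by `Z`). -/
def extd (Q : Set ℕ) (Def : ℕ → Formula ℕ) (Y Z : Set (Lit ℕ)) : Set (Lit ℕ) :=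
  restr Q Y ∪ {l | ∃ q ∈ Q, l = .pos q ∧ ((Def q).reduct Z).sat Y}

theorem mem_restr_congr {Q : Set ℕ} {Y Y' : Set (Lit ℕ)} (h : restr Q Y = restr Q Y')
    {l : Lit ℕ} (hl : l.atom ∉ Q) : l ∈ Y ↔ l ∈ Y' := by
  have := Set.ext_iff.1 h l
  simpa [restr, hl] using this

theorem restr_idem (Q : Set ℕ) (Y : Set (Lit ℕ)) : restr Q (restr Q Y) = restr Q Y := by
  ext l; simp only [restr, Set.mem_setOf_eq]; tauto

theorem sat_congr {Q : Set ℕ} {Z Z' : Set (Lit ℕ)} (h : restr Q Z = restr Q Z')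
    (F : Formula ℕ) (hF : ∀ q ∈ Q, q ∉ F.atoms) : F.sat Z ↔ F.sat Z' := by
  induction F with
  | lit l =>
    apply mem_restr_congr h
    intro hl
    exact hF _ hl rfl
  | fbot => rfl
  | ftop => rfl
  | naf F ih => exact not_congr (ih hF)
  | conj F G ihF ihG =>
    exact and_congr (ihF fun q hq h => hF q hq (Or.inl h)) (ihG fun q hq h => hF q hq (Or.inr h))
  | disj F G ihF ihG =>
    exact or_congr (ihF fun q hq h => hF q hq (Or.inl h)) (ihG fun q hq h => hF q hq (Or.inr h))

theorem rsat_congr {Q : Set ℕ} {Y Y' Z Z' : Set (Lit ℕ)} (hY : restr Q Y = restr Q Y')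
    (h : restr Q Z = restr Q Z')
    (F : Formula ℕ) (hF : ∀ q ∈ Q, q ∉ F.atoms) :
    (F.reduct Z).sat Y ↔ (F.reduct Z').sat Y' := by
  induction F with
  | lit l =>
    apply mem_restr_congr hY
    intro hl
    exact hF _ hl rfl
  | fbot => rfl
  | ftop => rfl
  | naf F ih =>
    have := sat_congr h F hF
    simp only [Formula.reduct, this]
    split <;> rfl
  | conj F G ihF ihG =>
    exact and_congr (ihF fun q hq h => hF q hq (Or.inl h)) (ihG fun q hq h => hF q hq (Or.inr h))
  | disj F G ihF ihG =>
    exact or_congr (ihF fun q hq h => hF q hq (Or.inl h)) (ihG fun q hq h => hF q hq (Or.inr h))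

theorem rsat_mono {Y Y' Z : Set (Lit ℕ)} (hY : Y ⊆ Y') (F : Formula ℕ) :
    (F.reduct Z).sat Y → (F.reduct Z).sat Y' := by
  induction F with
  | lit l => exact fun h => hY h
  | fbot => exact id
  | ftop => exact id
  | naf F ih =>
    simp only [Formula.reduct]
    split <;> exact id
  | conj F G ihF ihG => exact And.imp ihF ihG
  | disj F G ihF ihG => exact Or.imp ihF ihG

theorem progSat_congr {P : Set (NRule ℕ)} {Q : Set ℕ}
    (hP : ∀ q ∈ Q, ∀ r ∈ P, q ∉ r.head.atoms ∧ q ∉ r.body.atoms)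
    {Y Y' Z Z' : Set (Lit ℕ)} (hY : restr Q Y = restr Q Y')
    (h : restr Q Z = restr Q Z') :
    progSat Y (progReduct Z P) ↔ progSat Y' (progReduct Z' P) := by
  simp only [progSat, progReduct, Set.forall_mem_image]
  refine forall_congr' fun r => forall_congr' fun hr => ?_
  rw [rsat_congr hY h r.head fun q hq => (hP q hq r hr).1,
    rsat_congr hY h r.body fun q hq => (hP q hq r hr).2]

theorem progSat_union {P : Set (NRule ℕ)} {Q : Set ℕ} {Def : ℕ → Formula ℕ}
    {Y Z : Set (Lit ℕ)} :
    progSat Y (progReduct Z (P ∪ {r : NRule ℕ | ∃ q ∈ Q, r = ⟨.lit (.pos q), Def q⟩})) ↔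
    progSat Y (progReduct Z P) ∧ ∀ q ∈ Q, ((Def q).reduct Z).sat Y → Lit.pos q ∈ Y := by
  simp only [progSat, progReduct, Set.forall_mem_image]
  constructor
  · intro h
    exact ⟨fun r hr => h (Or.inl hr), fun q hq => h (Or.inr ⟨q, hq, rfl⟩)⟩
  · rintro ⟨h1, h2⟩ r (hr | ⟨q, hq, rfl⟩)
    · exact h1 hr
    · exact h2 q hq

theorem restr_extd (Q : Set ℕ) (Def : ℕ → Formula ℕ) (Y Z : Set (Lit ℕ)) :
    restr Q (extd Q Def Y Z) = restr Q Y := by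
  ext l
  constructor
  · rintro ⟨h | ⟨q, hq, rfl, _⟩, h2⟩
    · exact h
    · exact absurd hq h2
  · exact fun h => ⟨Or.inl h, h.2⟩

theorem restr_mono {Q : Set ℕ} {Y Y' : Set (Lit ℕ)} (h : Y ⊆ Y') : restr Q Y ⊆ restr Q Y' :=
  fun _ hl => ⟨h hl.1, hl.2⟩

theorem consistent_mono {Y Y' : Set (Lit ℕ)} (h : Y ⊆ Y') (h' : LitConsistent Y') :
    LitConsistent Y := fun a ha => h' a ⟨h ha.1, h ha.2⟩

theorem extd_consistent {Q : Set ℕ} {Def : ℕ → Formula ℕ} {Y Z : Set (Lit ℕ)}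
    (h : LitConsistent Y) : LitConsistent (extd Q Def Y Z) := by
  rintro a ⟨h1, h2⟩
  rcases h2 with h2 | ⟨q, _, h2, _⟩
  · rcases h1 with h1 | ⟨q, hq, h1, _⟩
    · exact h a ⟨h1.1, h2.1⟩
    · cases h1
      exact h2.2 hq
  · cases h2

theorem extd_sat {P : Set (NRule ℕ)} {Q : Set ℕ} {Def : ℕ → Formula ℕ}
    (hP : ∀ q ∈ Q, ∀ r ∈ P, q ∉ r.head.atoms ∧ q ∉ r.body.atoms)
    (hD : ∀ q ∈ Q, ∀ q' ∈ Q, q' ∉ (Def q).atoms)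
    {Y Z Z' : Set (Lit ℕ)} (hZ : restr Q Z = restr Q Z') (h : progSat Y (progReduct Z P)) :
    progSat (extd Q Def Y Z)
      (progReduct Z' (P ∪ {r : NRule ℕ | ∃ q ∈ Q, r = ⟨.lit (.pos q), Def q⟩})) := by
  rw [progSat_union]
  refine ⟨(progSat_congr hP (restr_extd Q Def Y Z).symm hZ).1 h, fun q hq hs => ?_⟩
  exact Or.inr ⟨q, hq, rfl, (rsat_congr (restr_extd Q Def Y Z) hZ.symm _ (hD q hq)).1 hs⟩

theorem extd_subset {P : Set (NRule ℕ)} {Q : Set ℕ} {Def : ℕ → Formula ℕ}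
    {Y Z : Set (Lit ℕ)} (hY : Y ⊆ Z)
    (h : progSat Z (progReduct Z (P ∪ {r : NRule ℕ | ∃ q ∈ Q, r = ⟨.lit (.pos q), Def q⟩}))) :
    extd Q Def Y Z ⊆ Z := by
  rintro l (hl | ⟨q, hq, rfl, hs⟩)
  · exact hY hl.1
  · exact (progSat_union.1 h).2 q hq (rsat_mono hY _ hs)

theorem extd_eq {P : Set (NRule ℕ)} {Q : Set ℕ} {Def : ℕ → Formula ℕ}
    (hP : ∀ q ∈ Q, ∀ r ∈ P, q ∉ r.head.atoms ∧ q ∉ r.body.atoms)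
    (hD : ∀ q ∈ Q, ∀ q' ∈ Q, q' ∉ (Def q).atoms) {Z : Set (Lit ℕ)}
    (h : AnswerSet Z (P ∪ {r : NRule ℕ | ∃ q ∈ Q, r = ⟨.lit (.pos q), Def q⟩})) :
    extd Q Def Z Z = Z :=
  h.2.2 _ (extd_consistent h.1) (extd_sat hP hD rfl (progSat_union.1 h.2.1).1)
    (extd_subset subset_rfl h.2.1)

/-- Lemma on Explicit Definitions: if the atoms of `Q` do not occur in `P` and the
formulas `Def q` contain no atoms from `Q`, then removing the atoms of `Q` is a
bijection from the answer sets of `P ∪ {q ← Def q : q ∈ Q}` onto the answer sets of `P`. -/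
theorem explicit_definitions_lemma (P : Set (NRule ℕ)) (Q : Set ℕ) (Def : ℕ → Formula ℕ)
    (hP : ∀ q ∈ Q, ∀ r ∈ P, q ∉ r.head.atoms ∧ q ∉ r.body.atoms)
    (hD : ∀ q ∈ Q, ∀ q' ∈ Q, q' ∉ (Def q).atoms) :
    Set.BijOn (fun Z : Set (Lit ℕ) => {l ∈ Z | l.atom ∉ Q})
      {Z : Set (Lit ℕ) |
        AnswerSet Z (P ∪ {r : NRule ℕ | ∃ q ∈ Q, r = ⟨.lit (.pos q), Def q⟩})}
      {Z : Set (Lit ℕ) | AnswerSet Z P} := by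
  refine ⟨?_, ?_, ?_⟩
  · intro Z hZ
    have hZ : AnswerSet Z _ := hZ
    change AnswerSet (restr Q Z) P
    refine ⟨consistent_mono (fun _ h => h.1) hZ.1, ?_, ?_⟩
    · exact (progSat_congr hP (restr_idem Q Z) (restr_idem Q Z)).2 (progSat_union.1 hZ.2.1).1
    · intro Y hY hs hsub
      have hYZ : Y ⊆ Z := fun l hl => (hsub hl).1
      have hs' := (progSat_congr hP (rfl : restr Q Y = restr Q Y) (restr_idem Q Z)).1 hs
      have he := hZ.2.2 (extd Q Def Y Z) (extd_consistent hY) (extd_sat hP hD rfl hs')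
        (extd_subset hYZ hZ.2.1)
      have h1 : restr Q Y = restr Q Z := by rw [← restr_extd Q Def Y Z, he]
      refine Set.Subset.antisymm hsub ?_
      rw [← h1]
      exact fun _ h => h.1
  · intro Z₁ h₁ Z₂ h₂ h
    have h : restr Q Z₁ = restr Q Z₂ := h
    rw [← extd_eq hP hD h₁, ← extd_eq hP hD h₂]
    ext l
    unfold extd
    rw [h]
    refine or_congr Iff.rfl (exists_congr fun q => and_congr_right fun hq => and_congr_right fun _ => ?_)
    exact rsat_congr h h _ (hD q hq)
  · intro W hW
    have hW : AnswerSet W P := hW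
    have hWW : restr Q W = W :=
      hW.2.2 _ (consistent_mono (fun _ h => h.1) hW.1)
        ((progSat_congr hP (restr_idem Q W) rfl).2 hW.2.1) (fun _ h => h.1)
    have hr : restr Q (extd Q Def W W) = restr Q W := restr_extd Q Def W W
    refine ⟨extd Q Def W W, ?_, hr.trans hWW⟩
    refine ⟨extd_consistent hW.1, extd_sat hP hD hr.symm hW.2.1, ?_⟩
    intro Y hY hs hsub
    rw [progSat_union] at hs
    have hYW : restr Q Y ⊆ W := by
      have := restr_mono (Q := Q) hsub
      rwa [hr, hWW] at this
    have h1 : restr Q Y = W := hW.2.2 _ (consistent_mono (fun _ h => h.1) hY)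
      ((progSat_congr hP (restr_idem Q Y) hr.symm).2 hs.1) hYW
    refine Set.Subset.antisymm hsub ?_
    rintro l (hl | ⟨q, hq, rfl, hl⟩)
    · rw [hWW, ← h1] at hl
      exact hl.1
    · exact hs.2 q hq ((rsat_congr (hWW.trans h1.symm) hr.symm _ (hD q hq)).1 hl)
end

section
/- Let Π be a program with nested expressions not containing negation as failure, let Z be a consistent set of literals, and let Z' be a subset of Z. If no literal in Z ∖ Z' has a regular occurrence in the head of any rule of Π, and Z ⊨ Π, then Z' ⊨ Π. -/
open Classical

/-- The literals occurring in a formula (every occurrence of a literal is regular,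
since literals are atomic in this syntax). -/
def Formula.lits {α : Type} : Formula α → Set (Lit α)
  | .lit l => {l}
  | .fbot => ∅
  | .ftop => ∅
  | .naf F => F.lits
  | .conj F G => F.lits ∪ G.lits
  | .disj F G => F.lits ∪ G.lits

/-- A formula does not contain negation as failure. -/
def Formula.nafFree {α : Type} : Formula α → Prop
  | .lit _ => True
  | .fbot => True
  | .ftop => True
  | .naf _ => False
  | .conj F G => F.nafFree ∧ G.nafFree
  | .disj F G => F.nafFree ∧ G.nafFree

theorem sat_transfer {α : Type} (A B : Set (Lit α)) (F : Formula α) (hF : F.nafFree)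
    (h : ∀ l ∈ F.lits, l ∈ A → l ∈ B) (hA : F.sat A) : F.sat B := by
  induction F with
  | lit l => exact h l rfl hA
  | fbot => exact hA
  | ftop => trivial
  | naf F ih => exact hF.elim
  | conj F G ihF ihG =>
    exact ⟨ihF hF.1 (fun l hl => h l (Or.inl hl)) hA.1,
      ihG hF.2 (fun l hl => h l (Or.inr hl)) hA.2⟩
  | disj F G ihF ihG =>
    exact Or.imp (ihF hF.1 (fun l hl => h l (Or.inl hl)))
      (ihG hF.2 (fun l hl => h l (Or.inr hl))) hA

/-- Let `P` be a program without negation as failure, `Z` a consistent set of literals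
and `Z' ⊆ Z`. If no literal of `Z ∖ Z'` has a (regular) occurrence in the head of a rule
of `P`, and `Z ⊨ P`, then `Z' ⊨ P`. -/
theorem monotone_lemma (P : Set (NRule ℕ))
    (hnaf : ∀ r ∈ P, r.head.nafFree ∧ r.body.nafFree)
    (Z Z' : Set (Lit ℕ)) (hZ : LitConsistent Z) (hsub : Z' ⊆ Z)
    (hhead : ∀ l ∈ Z \ Z', ∀ r ∈ P, l ∉ r.head.lits)
    (hsat : progSat Z P) :
    progSat Z' P := by
  intro r hr hb
  refine sat_transfer Z Z' _ (hnaf r hr).1 (fun l hl hlZ => ?_)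
    (hsat r hr (sat_transfer Z' Z _ (hnaf r hr).2 (fun l _ hl => hsub hl) hb))
  by_contra hn
  exact hhead l ⟨hlZ, hn⟩ r hr hl
end

section
/- Let Π be a program with nested expressions, and let S be the set of all literals that have a regular occurrence in Π within the scope of negation as failure. For any consistent sets Z₁ and Z₂ of literals, if Z₁ ∩ S = Z₂ ∩ S then Π^{Z₁} = Π^{Z₂}. -/
open Classical

/-- The literals having a (regular) occurrence in a formula within the scope of
negation as failure. -/
def Formula.litsUnderNaf {α : Type} : Formula α → Set (Lit α)
  | .lit _ => ∅
  | .fbot => ∅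
  | .ftop => ∅
  | .naf F => F.lits
  | .conj F G => F.litsUnderNaf ∪ G.litsUnderNaf
  | .disj F G => F.litsUnderNaf ∪ G.litsUnderNaf

theorem sat_congr_of_agree {α : Type} (Z₁ Z₂ : Set (Lit α)) (F : Formula α)
    (h : ∀ l ∈ F.lits, (l ∈ Z₁ ↔ l ∈ Z₂)) : F.sat Z₁ ↔ F.sat Z₂ := by
  induction F with
  | lit l => exact h l rfl
  | fbot => exact Iff.rfl
  | ftop => exact Iff.rfl
  | naf F ih => exact not_congr (ih h)
  | conj F G ihF ihG =>
    exact and_congr (ihF fun l hl => h l (Or.inl hl)) (ihG fun l hl => h l (Or.inr hl))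
  | disj F G ihF ihG =>
    exact or_congr (ihF fun l hl => h l (Or.inl hl)) (ihG fun l hl => h l (Or.inr hl))

theorem reduct_congr_of_agree {α : Type} (Z₁ Z₂ : Set (Lit α)) (F : Formula α)
    (h : ∀ l ∈ F.litsUnderNaf, (l ∈ Z₁ ↔ l ∈ Z₂)) : F.reduct Z₁ = F.reduct Z₂ := by
  induction F with
  | lit l => rfl
  | fbot => rfl
  | ftop => rfl
  | naf F ih =>
    have := sat_congr_of_agree Z₁ Z₂ F h
    simp only [Formula.reduct, this]
  | conj F G ihF ihG =>
    exact congrArg₂ Formula.conj (ihF fun l hl => h l (Or.inl hl)) (ihG fun l hl => h l (Or.inr hl))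
  | disj F G ihF ihG =>
    exact congrArg₂ Formula.disj (ihF fun l hl => h l (Or.inl hl)) (ihG fun l hl => h l (Or.inr hl))

/-- If two consistent sets of literals agree on the literals occurring in `P` within the
scope of negation as failure, then the reducts of `P` relative to them coincide. -/
theorem same_reduct (P : Set (NRule ℕ)) (Z₁ Z₂ : Set (Lit ℕ))
    (h₁ : LitConsistent Z₁) (h₂ : LitConsistent Z₂)
    (hagree : Z₁ ∩ (⋃ r ∈ P, r.head.litsUnderNaf ∪ r.body.litsUnderNaf)
            = Z₂ ∩ (⋃ r ∈ P, r.head.litsUnderNaf ∪ r.body.litsUnderNaf)) :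
    progReduct Z₁ P = progReduct Z₂ P := by
  have key : ∀ r ∈ P, ∀ l ∈ r.head.litsUnderNaf ∪ r.body.litsUnderNaf,
      (l ∈ Z₁ ↔ l ∈ Z₂) := by
    intro r hr l hl
    have hm : l ∈ ⋃ r ∈ P, r.head.litsUnderNaf ∪ r.body.litsUnderNaf :=
      Set.mem_biUnion hr hl
    have h := Set.ext_iff.mp hagree l
    exact ⟨fun a => (h.mp ⟨a, hm⟩).1, fun a => (h.mpr ⟨a, hm⟩).1⟩
  unfold progReduct
  apply Set.image_congr
  intro r hr
  exact congrArg₂ NRule.mk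
    (reduct_congr_of_agree Z₁ Z₂ r.head fun l hl => key r hr l (Or.inl hl))
    (reduct_congr_of_agree Z₁ Z₂ r.body fun l hl => key r hr l (Or.inr hl))
end
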